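/- arXiv:1105.3888 — 3 statements merged into one kernel-verified Lean document; each statement's English description precedes it below -/
import Mathlib

section
/- Let h : ℝ → ℝ be a differentiable function, let a ∈ ℝ, and suppose there exist constants c > 0, δ > 0 and T ≥ 0 such that for every t ≥ T with a − δ < h(t) < a + δ one has deriv h t ≥ c. Then a is not a cluster value of h at +∞; that is, there is no sequence tₙ → +∞ with h(tₙ) → a (in filter language, ¬ MapClusterPt a atTop h). -/
open Filter Topology

/-!
Inside a band `(l, u)` of values, `h` cannot cross downwards a line of slope `k < c`: where they
touch, `h` grows faster. If `h s ≥ b` with `l < b < u`, then for `t` so late that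
`u - b ≤ c * (t - s)` and any `v ∈ (b, u)`, the segment from `(s, b)` to `(t, v)` has slope less
than `c` and stays in the band, so `v ≤ h t`; letting `v → u` gives `u ≤ h t`. Thus `h` either never
rises above `l` or is eventually at least `u`, and no value in the band can be a cluster value.

Growth is measured by the upper right Dini derivative: `∀ k < c, ∃ᶠ z in 𝓝[>] x, k < slope h x z`
says that it is at least `c` at `x`.
-/

section

open Set

theorem le_of_forall_eq_imp_frequently_le {X α : Type*} [ConditionallyCompleteLinearOrder X]
    [TopologicalSpace X] [OrderTopology X] [DenselyOrdered X] [LinearOrder α] [TopologicalSpace α]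
    [OrderClosedTopology α] {f g : X → α} {s t : X} (hst : s ≤ t)
    (hf : ContinuousOn f (Icc s t)) (hg : ContinuousOn g (Icc s t)) (hs : f s ≤ g s)
    (htouch : ∀ x ∈ Ico s t, f x = g x → ∃ᶠ z in 𝓝[>] x, f z ≤ g z) : f t ≤ g t := by
  have hclosed : IsClosed ({x | f x ≤ g x} ∩ Icc s t) := by
    rw [inter_comm]
    exact isClosed_Icc.isClosed_le hf hg
  refine hclosed.mem_of_ge_of_forall_exists_gt hs hst fun x ⟨hx, hxst⟩ ↦ ?_
  have hfreq : ∃ᶠ z in 𝓝[>] x, f z ≤ g z := by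
    rcases (show f x ≤ g x from hx).eq_or_lt with heq | hlt
    · exact htouch x hxst heq
    · have hne : (𝓝[>] x).NeBot := nhdsGT_neBot_of_exists_gt ⟨t, hxst.2⟩
      have hle : 𝓝[>] x ≤ 𝓝[Icc s t] x :=
        nhdsWithin_le_of_mem (Icc_mem_nhdsGT_of_mem hxst)
      have hfx := (hf x (Ico_subset_Icc_self hxst)).mono_left hle
      have hgx := (hg x (Ico_subset_Icc_self hxst)).mono_left hle
      exact ((hfx.eventually_lt hgx hlt).mono fun _ ↦ le_of_lt).frequently
  exact (hfreq.and_eventually (Ioc_mem_nhdsGT hxst.2)).exists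

theorem add_mul_sub_le_of_frequently_lt_slope {h : ℝ → ℝ} {b k s t : ℝ} (hst : s ≤ t)
    (hcont : ContinuousOn h (Icc s t)) (hs : b ≤ h s)
    (hslope : ∀ x ∈ Ico s t, b + k * (x - s) = h x → ∃ᶠ z in 𝓝[>] x, k < slope h x z) :
    b + k * (t - s) ≤ h t := by
  refine le_of_forall_eq_imp_frequently_le (f := fun x ↦ b + k * (x - s)) hst (by fun_prop) hcont
    (by simpa using hs) fun x hx hxeq ↦ ?_
  refine ((hslope x hx hxeq).and_eventually self_mem_nhdsWithin).mono fun z ⟨hkz, hxz⟩ ↦ ?_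
  rw [slope_def_field, lt_div_iff₀ (sub_pos.2 hxz)] at hkz
  linarith

theorem le_of_frequently_lt_slope_of_mem_Ioo {h : ℝ → ℝ} {b c l u s t : ℝ} (hst : s ≤ t)
    (hcont : ContinuousOn h (Icc s t)) (hb : b ∈ Ioo l u) (hs : b ≤ h s)
    (ht : u - b ≤ c * (t - s))
    (hslope : ∀ x ∈ Ico s t, h x ∈ Ioo l u → ∀ k < c, ∃ᶠ z in 𝓝[>] x, k < slope h x z) :
    u ≤ h t := by
  have hlt : s < t := hst.lt_of_ne (by rintro rfl; linarith [hb.2])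
  by_contra! htu
  obtain ⟨v, hv, hvu⟩ := exists_between (max_lt hb.2 htu)
  obtain ⟨hbv, htv⟩ := max_lt_iff.1 hv
  let k := (v - b) / (t - s)
  have hk : 0 < k := div_pos (sub_pos.2 hbv) (sub_pos.2 hlt)
  have hkc : k < c := (div_lt_iff₀ (sub_pos.2 hlt)).2 (by linarith)
  have hend : b + k * (t - s) = v := by
    rw [div_mul_cancel₀ _ (sub_pos.2 hlt).ne', add_sub_cancel]
  refine htv.not_ge (hend ▸ add_mul_sub_le_of_frequently_lt_slope hst hcont hs fun x hx hxeq ↦ ?_)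
  have hl : l < h x := by
    have hrise := mul_nonneg hk.le (sub_nonneg.2 hx.1)
    linarith [hb.1]
  have hu : h x < u := by
    have hrise_lt := mul_lt_mul_of_pos_left (sub_lt_sub_right hx.2 s) hk
    linarith
  exact hslope x hx ⟨hl, hu⟩ k hkc

theorem forall_le_or_eventually_ge_of_frequently_lt_slope {h : ℝ → ℝ} {c l u T : ℝ} (hc : 0 < c)
    (hlu : l < u) (hcont : ContinuousOn h (Ici T))
    (hslope : ∀ t, T ≤ t → h t ∈ Ioo l u → ∀ k < c, ∃ᶠ z in 𝓝[>] t, k < slope h t z) :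
    (∀ t, T ≤ t → h t ≤ l) ∨ ∀ᶠ t in atTop, u ≤ h t := by
  refine or_iff_not_imp_left.2 fun hexceeds ↦ ?_
  push Not at hexceeds
  obtain ⟨s, hTs, hls⟩ := hexceeds
  obtain ⟨b, hlb, hb⟩ := exists_between (lt_min hls hlu)
  obtain ⟨hbs, hbu⟩ := lt_min_iff.1 hb
  filter_upwards [eventually_ge_atTop s, eventually_ge_atTop (s + (u - b) / c)] with t hst ht
  have hlate : u - b ≤ c * (t - s) := (div_le_iff₀' hc).1 (by linarith)
  exact le_of_frequently_lt_slope_of_mem_Ioo hst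
    (hcont.mono fun x hx ↦ hTs.trans hx.1) ⟨hlb, hbu⟩ hbs.le hlate
    fun x hx ↦ hslope x (hTs.trans hx.1)

theorem frequently_lt_slope_of_hasDerivWithinAt_Ioi {h : ℝ → ℝ} {h' k t : ℝ}
    (hderiv : HasDerivWithinAt h h' (Ioi t) t) (hk : k < h') :
    ∃ᶠ z in 𝓝[>] t, k < slope h t z :=
  (((hasDerivWithinAt_iff_tendsto_slope' self_notMem_Ioi).1 hderiv).eventually_const_lt
    hk).frequently

theorem stmt_0_general {h : ℝ → ℝ} {a c l u T : ℝ} (hc : 0 < c) (ha : a ∈ Ioo l u)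
    (hcont : ContinuousOn h (Ici T))
    (hslope : ∀ t, T ≤ t → h t ∈ Ioo l u → ∀ k < c, ∃ᶠ z in 𝓝[>] t, k < slope h t z) :
    ¬ MapClusterPt a atTop h := by
  intro hcluster
  have hband : ∃ᶠ t in atTop, h t ∈ Ioo l u := hcluster.frequently (Ioo_mem_nhds ha.1 ha.2)
  rcases forall_le_or_eventually_ge_of_frequently_lt_slope hc (ha.1.trans ha.2) hcont hslope
    with hle | hge
  · exact hband ((eventually_ge_atTop T).mono fun t ht hmem ↦ hmem.1.not_ge (hle t ht))
  · exact hband (hge.mono fun t ht hmem ↦ hmem.2.not_ge ht)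

end

/-- If `h : ℝ → ℝ` is differentiable and there are `c > 0`, `δ > 0`, `T ≥ 0` such that
`deriv h t ≥ c` whenever `t ≥ T` and `a - δ < h t < a + δ`, then `a` is not a cluster
value of `h` at `+∞`. -/
theorem stmt_0 (h : ℝ → ℝ) (hdiff : Differentiable ℝ h) (a : ℝ)
    (c δ T : ℝ) (hc : 0 < c) (hδ : 0 < δ) (hT : 0 ≤ T)
    (hder : ∀ t, T ≤ t → a - δ < h t → h t < a + δ → c ≤ deriv h t) :
    ¬ MapClusterPt a atTop h :=
  stmt_0_general hc ⟨sub_lt_self a hδ, lt_add_of_pos_right a hδ⟩ hdiff.continuous.continuousOn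
    fun t ht hmem _ hk ↦
      frequently_lt_slope_of_hasDerivWithinAt_Ioi (hdiff t).hasDerivAt.hasDerivWithinAt
        (hk.trans_le (hder t ht hmem.1 hmem.2))
end

section
/- Let E be a complete real inner product space, f : E → ℝ a differentiable function, and γ : ℝ → E a curve such that for every t ∈ ℝ, HasDerivAt γ (gradient f (γ t)) t. If γ is periodic, i.e. there exists T > 0 with γ(t + T) = γ(t) for all t ∈ ℝ, then γ is constant. In particular a gradient vector field has no nonconstant periodic orbits. -/
open Filter Topology

/-!
Along a gradient trajectory the chain rule gives `(f ∘ γ)' = ‖∇ f (γ t)‖ ^ 2 ≥ 0`. If `f ∘ γ` takes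
the same value at the endpoints of a time interval, it is therefore constant there, so the speed
`‖∇ f (γ t)‖` of `γ` vanishes on that interval. For periodic `f ∘ γ`, any two times lie in such an
interval.
-/

section GradientTrajectory

open Set

theorem hasDerivWithinAt_comp_of_hasGradientAt {𝕜 E : Type*} [RCLike 𝕜] [NormedAddCommGroup E]
    [InnerProductSpace 𝕜 E] [CompleteSpace E] {f : E → 𝕜} {γ : 𝕜 → E} {f' γ' : E} {s : Set 𝕜}
    {t : 𝕜} (hf : HasGradientAt f f' (γ t)) (hγ : HasDerivWithinAt γ γ' s t) :
    HasDerivWithinAt (f ∘ γ) (inner 𝕜 f' γ') s t :=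
  hf.hasFDerivAt.comp_hasDerivWithinAt t hγ

theorem eqOn_Icc_of_monotoneOn_of_eq_endpoints {α β : Type*} [Preorder α] [PartialOrder β]
    {g : α → β} {a b : α} (hg : MonotoneOn g (Icc a b)) (hab : g a = g b) :
    EqOn g (fun _ ↦ g a) (Icc a b) := by
  intro t ht
  have hle : a ≤ b := ht.1.trans ht.2
  refine le_antisymm ?_ (hg (left_mem_Icc.2 hle) ht ht.1)
  exact (hg ht (right_mem_Icc.2 hle) ht.2).trans_eq hab.symm

variable {E : Type*} [NormedAddCommGroup E] [InnerProductSpace ℝ E] [CompleteSpace E]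
  {f : E → ℝ} {γ : ℝ → E} {s : Set ℝ} {a b t : ℝ}

theorem hasDerivWithinAt_comp_integralCurve_gradient (hf : DifferentiableAt ℝ f (γ t))
    (hγ : IsIntegralCurveOn γ (fun _ ↦ gradient f) s) (ht : t ∈ s) :
    HasDerivWithinAt (f ∘ γ) (‖gradient f (γ t)‖ ^ 2) s t := by
  rw [← real_inner_self_eq_norm_sq]
  exact hasDerivWithinAt_comp_of_hasGradientAt hf.hasGradientAt (hγ t ht)

theorem monotoneOn_comp_integralCurve_gradient (hs : Convex ℝ s)
    (hf : ∀ t ∈ s, DifferentiableAt ℝ f (γ t))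
    (hγ : IsIntegralCurveOn γ (fun _ ↦ gradient f) s) : MonotoneOn (f ∘ γ) s := by
  have hderiv (t : ℝ) (ht : t ∈ s) := hasDerivWithinAt_comp_integralCurve_gradient (hf t ht) hγ ht
  exact monotoneOn_of_hasDerivWithinAt_nonneg hs
    (fun t ht ↦ (hderiv t ht).continuousWithinAt)
    (fun t ht ↦ (hderiv t (interior_subset ht)).mono interior_subset)
    (fun _ _ ↦ sq_nonneg _)

theorem gradient_eq_zero_of_eqOn_const_comp_integralCurve {c : ℝ}
    (hf : DifferentiableAt ℝ f (γ t)) (hγ : IsIntegralCurveOn γ (fun _ ↦ gradient f) s)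
    (hc : EqOn (f ∘ γ) (fun _ ↦ c) s) (hs : UniqueDiffWithinAt ℝ s t) (ht : t ∈ s) :
    gradient f (γ t) = 0 := by
  have hspeed := hasDerivWithinAt_comp_integralCurve_gradient hf hγ ht
  have hconst : HasDerivWithinAt (f ∘ γ) 0 s t :=
    (hasDerivWithinAt_const t s c).congr hc (hc ht)
  have hsq : ‖gradient f (γ t)‖ ^ 2 = 0 := hs.eq_deriv s hspeed hconst
  exact norm_eq_zero.1 (sq_eq_zero_iff.1 hsq)

theorem integralCurve_gradient_eqOn_const_of_eq_endpoints
    (hf : ∀ t ∈ Icc a b, DifferentiableAt ℝ f (γ t))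
    (hγ : IsIntegralCurveOn γ (fun _ ↦ gradient f) (Icc a b)) (hab : f (γ a) = f (γ b)) :
    EqOn γ (fun _ ↦ γ a) (Icc a b) := by
  have hconst : EqOn (f ∘ γ) (fun _ ↦ f (γ a)) (Icc a b) :=
    eqOn_Icc_of_monotoneOn_of_eq_endpoints
      (monotoneOn_comp_integralCurve_gradient (convex_Icc a b) hf hγ) hab
  refine constant_of_derivWithin_zero (fun t ht ↦ (hγ t ht).differentiableWithinAt) fun t ht ↦ ?_
  have htIcc : t ∈ Icc a b := Ico_subset_Icc_self ht
  have hunique : UniqueDiffWithinAt ℝ (Icc a b) t :=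
    uniqueDiffOn_Icc (ht.1.trans_lt ht.2) t htIcc
  rw [(hγ t htIcc).derivWithin hunique]
  exact gradient_eq_zero_of_eqOn_const_comp_integralCurve (hf t htIcc) hγ hconst hunique htIcc

theorem stmt_2_general (hf : ∀ t, DifferentiableAt ℝ f (γ t))
    (hγ : IsIntegralCurve γ fun _ ↦ gradient f) {T : ℝ} (hT : 0 < T)
    (hper : Function.Periodic (f ∘ γ) T) (s t : ℝ) : γ s = γ t := by
  wlog hst : s ≤ t generalizing s t
  · exact (this t s (le_of_not_ge hst)).symm
  obtain ⟨n, hn⟩ : ∃ n : ℕ, t - s ≤ n • T := Archimedean.arch (t - s) hT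
  have hreturn : f (γ s) = f (γ (s + n • T)) := (hper.nsmul n s).symm
  have hmem : t ∈ Icc s (s + n • T) := ⟨hst, sub_le_iff_le_add'.1 hn⟩
  exact (integralCurve_gradient_eqOn_const_of_eq_endpoints (fun t _ ↦ hf t)
    (hγ.isIntegralCurveOn _) hreturn hmem).symm

end GradientTrajectory

/-- A periodic gradient trajectory of a differentiable function on a complete real inner
product space is constant: a gradient vector field has no nonconstant periodic orbits. -/
theorem stmt_2 {E : Type*} [NormedAddCommGroup E] [InnerProductSpace ℝ E] [CompleteSpace E]
    (f : E → ℝ) (hf : Differentiable ℝ f) (γ : ℝ → E)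
    (hγ : ∀ t : ℝ, HasDerivAt γ (gradient f (γ t)) t)
    (hper : ∃ T : ℝ, 0 < T ∧ ∀ t : ℝ, γ (t + T) = γ t) :
    ∀ s t : ℝ, γ s = γ t := by
  obtain ⟨T, hT, hperT⟩ := hper
  exact stmt_2_general (fun t ↦ hf (γ t)) hγ hT fun t ↦ congrArg f (hperT t)
end

section
/- Let α be a type, let l be a nontrivial filter on α, let z : α → ℝ be a function tending along l to 0 from the right (Tendsto z l (𝓝[>] 0)), and let f : α → ℝ. Call a real number ν an exponent for f (relative to z and l) if (1) there is a constant C with |f(x)| ≤ C · z(x)^ν eventually along l, and (2) there exists a nonzero real number c that is a cluster value of the function x ↦ f(x)/z(x)^ν along l (MapClusterPt c l (f/z^ν)). Then there is at most one exponent: if ν₁ and ν₂ are both exponents for f, then ν₁ = ν₂. -/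
open Filter Topology

/-- `ν` is an exponent for `f` relative to `z` and the filter `l` if `|f| ≤ C·z^ν`
eventually along `l` and some nonzero real number is a cluster value of `f/z^ν` along
`l`. -/
def IsExponent {α : Type*} (l : Filter α) (z f : α → ℝ) (ν : ℝ) : Prop :=
  (∃ C : ℝ, ∀ᶠ x in l, |f x| ≤ C * z x ^ ν) ∧
  (∃ c : ℝ, c ≠ 0 ∧ MapClusterPt c l (fun x => f x / z x ^ ν))

open Asymptotics

theorem isLittleO_rpow_rpow_nhdsGT_zero {a b : ℝ} (hab : a < b) :
    (fun x : ℝ ↦ x ^ b) =o[𝓝[>] 0] fun x ↦ x ^ a := by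
  have h_pos : ∀ᶠ x : ℝ in 𝓝[>] 0, 0 < x := self_mem_nhdsWithin
  have h_diff : Tendsto (fun x : ℝ ↦ x ^ (b - a)) (𝓝[>] 0) (𝓝 0) := by
    have h_cont : ContinuousAt (fun x : ℝ ↦ x ^ (b - a)) 0 :=
      Real.continuousAt_rpow_const 0 (b - a) (.inr (sub_pos.2 hab).le)
    simpa only [Real.zero_rpow (sub_pos.2 hab).ne'] using
      h_cont.tendsto.mono_left nhdsWithin_le_nhds
  refine (isLittleO_iff_tendsto' ?_).2 (h_diff.congr' ?_)
  · filter_upwards [h_pos] with x hx h_zero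
    exact absurd h_zero (Real.rpow_pos_of_pos hx a).ne'
  · filter_upwards [h_pos] with x hx using Real.rpow_sub hx b a

section

variable {α : Type*} {l : Filter α}

theorem not_isLittleO_of_mapClusterPt_div {𝕜 : Type*} [NormedDivisionRing 𝕜] {f g : α → 𝕜}
    {c : 𝕜} (hc : c ≠ 0) (h : MapClusterPt c l fun x ↦ f x / g x) : ¬ f =o[l] g := by
  intro hfg
  have h_zero : ClusterPt c (𝓝 0) := ClusterPt.mono h hfg.tendsto_div_nhds_zero
  exact hc (eq_of_nhds_neBot h_zero.neBot)

theorem le_of_isBigO_rpow_of_not_isLittleO_rpow {E : Type*} [Norm E] {z : α → ℝ} {f : α → E}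
    {a b : ℝ} (hz : Tendsto z l (𝓝[>] 0)) (hO : f =O[l] fun x ↦ z x ^ b)
    (ho : ¬ f =o[l] fun x ↦ z x ^ a) : b ≤ a := by
  by_contra! hab
  exact ho (hO.trans_isLittleO ((isLittleO_rpow_rpow_nhdsGT_zero hab).comp_tendsto hz))

namespace IsExponent

variable {z f : α → ℝ} {ν : ℝ}

theorem isBigO (h : IsExponent l z f ν) : f =O[l] fun x ↦ z x ^ ν := by
  obtain ⟨C, hC⟩ := h.1
  have h_bound : f =O[l] fun x ↦ C * z x ^ ν := .of_norm_eventuallyLE hC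
  exact h_bound.trans (isBigO_const_mul_self C _ l)

theorem not_isLittleO (h : IsExponent l z f ν) : ¬ f =o[l] fun x ↦ z x ^ ν := by
  obtain ⟨_, hc, h_cluster⟩ := h.2
  exact not_isLittleO_of_mapClusterPt_div hc h_cluster

end IsExponent

end

/-- Uniqueness of the exponent: if `z → 0⁺` along a nontrivial filter `l`, then a
function `f` admits at most one exponent relative to `z` and `l`. -/
theorem stmt_8 {α : Type*} (l : Filter α) [l.NeBot] (z : α → ℝ)
    (hz : Tendsto z l (𝓝[>] (0 : ℝ))) (f : α → ℝ) (ν₁ ν₂ : ℝ)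
    (h₁ : IsExponent l z f ν₁) (h₂ : IsExponent l z f ν₂) : ν₁ = ν₂ :=
  le_antisymm (le_of_isBigO_rpow_of_not_isLittleO_rpow hz h₁.isBigO h₂.not_isLittleO)
    (le_of_isBigO_rpow_of_not_isLittleO_rpow hz h₂.isBigO h₁.not_isLittleO)
end
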